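/- (Blow-up size reduction.) For all positive integers n and d there exists a natural number N such that the following holds. Let F be a field with |F| ≥ N, let B ≤ M(n,F) be a matrix space, and suppose d > n + 1. If the (d,d)-blow-up B^{(d,d)} contains a matrix of rank dn, then the (d−1, d−1)-blow-up B^{(d−1,d−1)} contains a matrix of rank (d−1)n. -/

import Mathlib

open Matrix Kronecker

/-- The (k,ℓ)-blow-up of a matrix space `B ≤ M(n,F)`. -/
def blowUp {F : Type} [Field F] {n : ℕ} (B : Submodule F (Matrix (Fin n) (Fin n) F))
    (k ℓ : ℕ) : Submodule F (Matrix (Fin n × Fin k) (Fin n × Fin ℓ) F) :=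
  Submodule.span F {M | ∃ A ∈ B, ∃ T : Matrix (Fin k) (Fin ℓ) F, M = A ⊗ₖ T}

/-! ### Generic rank under extension of scalars -/

section GenericRank

variable {L K : Type*} [Field L] [Field K] [Algebra L K]

theorem Matrix.exists_det_add_smul_ne_zero {ι : Type*} [Fintype ι] [DecidableEq ι]
    (s : Finset L) (hs : Fintype.card ι < s.card) (M A : Matrix ι ι K) (c : K)
    (h : (M + c • A).det ≠ 0) : ∃ a : L, (M + algebraMap L K a • A).det ≠ 0 := by
  classical
  by_contra! hcon
  set p : Polynomial K :=
    ((Polynomial.X : Polynomial K) • A.map Polynomial.C + M.map Polynomial.C).det with hp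
  have heval : ∀ x : K, p.eval x = (M + x • A).det := by
    intro x
    rw [hp, ← Polynomial.coe_evalRingHom, RingHom.map_det]
    congr 1
    ext i j
    simp [add_comm, mul_comm x]
  have hp0 : p ≠ 0 := by
    rintro h0
    exact h (by rw [← heval, h0, Polynomial.eval_zero])
  have hdeg : p.natDegree ≤ Fintype.card ι := Polynomial.natDegree_det_X_add_C_le A M
  have hcard : (s.image (algebraMap L K)).card = s.card :=
    Finset.card_image_of_injective _ (algebraMap L K).injective
  refine hp0 (Polynomial.eq_zero_of_natDegree_lt_card_of_eval_eq_zero' p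
    (s.image (algebraMap L K)) ?_ (by omega))
  intro x hx
  obtain ⟨a, -, rfl⟩ := Finset.mem_image.1 hx
  rw [heval, hcon]

/-- If a matrix in the `K`-span of an `L`-space `W` is nonsingular after a linear map `φ`, and `L`
is large enough, then so is some matrix in `W`. -/
theorem Submodule.exists_det_ne_zero_of_mem_span {V ι : Type*} [AddCommGroup V] [Module K V]
    [Module L V] [IsScalarTower L K V] [Fintype ι] [DecidableEq ι] (φ : V →ₗ[K] Matrix ι ι K)
    (s : Finset L) (hs : Fintype.card ι < s.card) (W : Submodule L V) {A : V}
    (hA : A ∈ Submodule.span K (W : Set V)) (h : (φ A).det ≠ 0) :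
    ∃ M ∈ W, (φ M).det ≠ 0 := by
  suffices H : ∀ (c : K) (M : Matrix ι ι K), (M + c • φ A).det ≠ 0 →
      ∃ w ∈ W, (M + φ w).det ≠ 0 by
    simpa using H 1 0 (by simpa using h)
  clear h
  induction hA using Submodule.span_induction with
  | mem w hw =>
    intro c M h
    obtain ⟨a, ha⟩ := Matrix.exists_det_add_smul_ne_zero s hs M (φ w) c h
    refine ⟨a • w, W.smul_mem a hw, ?_⟩
    rwa [← algebraMap_smul K a w, map_smul]
  | zero => exact fun c M h => ⟨0, W.zero_mem, by simpa using h⟩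
  | add x y _ _ hx hy =>
    intro c M h
    obtain ⟨w, hw, h⟩ := hx c (M + c • φ y) (by rwa [add_assoc, ← smul_add, ← map_add, add_comm y])
    obtain ⟨w', hw', h⟩ := hy c (M + φ w) (by rwa [add_right_comm])
    exact ⟨w + w', W.add_mem hw hw', by rwa [map_add, ← add_assoc]⟩
  | smul b x _ hx =>
    intro c M h
    exact hx (c * b) M (by rwa [map_smul, smul_smul] at h)

theorem Submodule.exists_rank_le_of_mem_span {ι : Type*} [Fintype ι] [DecidableEq ι] [Infinite L]
    (W : Submodule L (Matrix ι ι K)) {A : Matrix ι ι K}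
    (hA : A ∈ Submodule.span K (W : Set (Matrix ι ι K))) :
    ∃ M ∈ W, A.rank ≤ M.rank := by
  obtain ⟨V, U, e, -, -, h⟩ := A.exists_rank_normal_form
  let f : Fin A.rank → ι := fun i => e.symm (Sum.inl i)
  let φ : Matrix ι ι K →ₗ[K] Matrix (Fin A.rank) (Fin A.rank) K :=
    { toFun := fun M => (V * M * U).submatrix f f
      map_add' := fun M N => by rw [mul_add, add_mul]; rfl
      map_smul' := fun c M => by rw [mul_smul_comm, smul_mul_assoc]; rfl }
  have hφ : (φ A).det ≠ 0 := by
    have : φ A = 1 := by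
      change (V * A * U).submatrix f f = 1
      rw [h]
      ext i j
      simp [f, Matrix.one_apply]
    simp [this]
  obtain ⟨s, hs⟩ := Infinite.exists_subset_card_eq L (Fintype.card (Fin A.rank) + 1)
  obtain ⟨M, hM, hdet⟩ := W.exists_det_ne_zero_of_mem_span φ s (by omega) hA hφ
  refine ⟨M, hM, ?_⟩
  calc A.rank = (φ M).rank := by
        rw [Matrix.rank_of_isUnit _ ((Matrix.isUnit_iff_isUnit_det _).2 hdet.isUnit),
          Fintype.card_fin]
    _ ≤ (V * M * U).rank := Matrix.rank_submatrix_le _ _ _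
    _ ≤ (V * M).rank := Matrix.rank_mul_le_left _ _
    _ ≤ M.rank := Matrix.rank_mul_le_right _ _

end GenericRank

theorem Matrix.rank_le_rank_map {L K ι : Type*} [Field L] [Field K] [Fintype ι]
    [DecidableEq ι] (f : L →+* K) (A : Matrix ι ι L) : A.rank ≤ (A.map f).rank := by
  obtain ⟨V, U, e, -, -, h⟩ := A.exists_rank_normal_form
  let g : Fin A.rank → ι := fun i => e.symm (Sum.inl i)
  have hone : ((V * A * U).map f).submatrix g g = 1 := by
    rw [h]
    ext i j
    simp [g, Matrix.one_apply, apply_ite f]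
  calc A.rank = (((V * A * U).map f).submatrix g g).rank := by
        rw [hone, Matrix.rank_one, Fintype.card_fin]
    _ ≤ (V.map f * A.map f * U.map f).rank := by
        rw [← Matrix.map_mul, ← Matrix.map_mul]
        exact Matrix.rank_submatrix_le _ _ _
    _ ≤ (V.map f * A.map f).rank := Matrix.rank_mul_le_left _ _
    _ ≤ (A.map f).rank := Matrix.rank_mul_le_right _ _

/-! ### Block matrices with blocks in a division algebra -/

/-- A square block matrix whose blocks lie in a finite-dimensional algebra `D` of matrices, all of
whose nonzero elements are nonsingular, is either nonsingular or has corank at least the size of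
a block. -/
theorem Matrix.det_ne_zero_or_rank_add_card_le {L K ι κ : Type*} [Field L] [Field K] [Algebra L K]
    [FiniteDimensional L K] [Fintype ι] [DecidableEq ι] [Fintype κ] [DecidableEq κ]
    (D : Subalgebra L (Matrix κ κ K)) (hD : ∀ X ∈ D, X ≠ 0 → X.det ≠ 0) (M : Matrix ι ι D) :
    (Matrix.compRingEquiv ι κ K (M.map D.val)).det ≠ 0 ∨
      (Matrix.compRingEquiv ι κ K (M.map D.val)).rank + Fintype.card κ ≤
        Fintype.card (ι × κ) := by
  let Φ : Matrix ι ι D →+* Matrix (ι × κ) (ι × κ) K :=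
    (Matrix.compRingEquiv ι κ K).toRingHom.comp D.val.toRingHom.mapMatrix
  change (Φ M).det ≠ 0 ∨ (Φ M).rank + _ ≤ _
  by_cases hinj : Function.Injective (LinearMap.mulLeft L M)
  · left
    obtain ⟨N, hN⟩ := LinearMap.injective_iff_surjective.1 hinj 1
    have : Φ M * Φ N = 1 := by rw [← map_mul, ← map_one Φ]; exact congrArg Φ hN
    exact ((Matrix.isUnit_iff_isUnit_det _).1 (IsUnit.of_mul_eq_one _ this)).ne_zero
  · right
    rw [injective_iff_map_eq_zero] at hinj
    push Not at hinj
    obtain ⟨N, hN, hN0⟩ := hinj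
    have hmul : Φ M * Φ N = 0 := by rw [← map_mul, ← map_zero Φ]; exact congrArg Φ hN
    refine le_trans (Nat.add_le_add_left ?_ _)
      (Matrix.rank_add_rank_le_card_of_mul_eq_zero hmul)
    obtain ⟨p, q, hpq⟩ : ∃ p q, N p q ≠ 0 := by
      by_contra! h
      exact hN0 (Matrix.ext h)
    have hdet := hD (N p q) (N p q).2 (by simpa using hpq)
    calc Fintype.card κ = ((N p q : Matrix κ κ K)).rank :=
          (Matrix.rank_of_isUnit _ ((Matrix.isUnit_iff_isUnit_det _).2 hdet.isUnit)).symm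
      _ = ((Φ N).submatrix (fun a => (p, a)) (fun b => (q, b))).rank := rfl
      _ ≤ (Φ N).rank := Matrix.rank_submatrix_le _ _ _

/-! ### Cyclic algebras -/

section CyclicAlgebra

variable {F K : Type*} [Field F] [Field K] [Algebra F K] {m : ℕ}

/-- The matrix of the cyclic shift with the entry `t` in the corner. -/
def cyclicShift (m : ℕ) (t : K) : Matrix (Fin (m + 1)) (Fin (m + 1)) K :=
  Matrix.of fun i j => if j = i + 1 then (if i = Fin.last m then t else 1) else 0

/-- The matrices on which the automorphism `τ` acts as conjugation by the cyclic shift, as an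
algebra over the fixed field of `τ`. -/
def cyclicAlgebra (m : ℕ) (τ : K ≃ₐ[F] K) (t : K) :
    Subalgebra (IntermediateField.fixedField (Subgroup.zpowers τ))
      (Matrix (Fin (m + 1)) (Fin (m + 1)) K) where
  carrier := {X | X.map τ * cyclicShift m t = cyclicShift m t * X}
  mul_mem' {X Y} hX hY := by
    change (X * Y).map τ * cyclicShift m t = cyclicShift m t * (X * Y)
    have hX' : X.map τ * cyclicShift m t = cyclicShift m t * X := hX
    have hY' : Y.map τ * cyclicShift m t = cyclicShift m t * Y := hY
    rw [Matrix.map_mul, mul_assoc, hY', ← mul_assoc, hX', mul_assoc]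
  add_mem' {X Y} hX hY := by
    change (X + Y).map τ * cyclicShift m t = cyclicShift m t * (X + Y)
    have hX' : X.map τ * cyclicShift m t = cyclicShift m t * X := hX
    have hY' : Y.map τ * cyclicShift m t = cyclicShift m t * Y := hY
    rw [Matrix.map_add τ (map_add τ), add_mul, hX', hY', mul_add]
  algebraMap_mem' c := by
    have hc : τ c = c :=
      (IntermediateField.mem_fixedField_iff _ _).1 c.2 τ (Subgroup.mem_zpowers τ)
    have hmap : (algebraMap (IntermediateField.fixedField (Subgroup.zpowers τ))
        (Matrix (Fin (m + 1)) (Fin (m + 1)) K) c).map τ = algebraMap _ _ c := by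
      ext i j
      rw [Matrix.map_apply, Matrix.algebraMap_matrix_apply]
      split_ifs
      · exact hc
      · exact map_zero τ
    change _ * _ = _ * _
    rw [hmap, Algebra.commutes]

theorem mem_cyclicAlgebra {τ : K ≃ₐ[F] K} {t : K} {X : Matrix (Fin (m + 1)) (Fin (m + 1)) K} :
    X ∈ cyclicAlgebra m τ t ↔ X.map τ * cyclicShift m t = cyclicShift m t * X :=
  Iff.rfl

theorem cyclicAlgebra_apply_add_one {τ : K ≃ₐ[F] K} {t : K}
    {X : Matrix (Fin (m + 1)) (Fin (m + 1)) K} (hX : X ∈ cyclicAlgebra m τ t)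
    (i j : Fin (m + 1)) :
    (if i = Fin.last m then t else 1) * X (i + 1) (j + 1) =
      τ (X i j) * if j = Fin.last m then t else 1 := by
  have h := congrFun (congrFun (mem_cyclicAlgebra.1 hX) i) (j + 1)
  simpa [Matrix.mul_apply, cyclicShift, eq_comm] using h.symm

theorem det_ne_zero_of_mem_cyclicAlgebra {τ : K ≃ₐ[F] K} {t : K}
    (v : Valuation K (WithZero (Multiplicative ℤ))) (hvt : v t = WithZero.exp 1)
    (hvτ : ∀ x, v (τ x) = v x) {X : Matrix (Fin (m + 1)) (Fin (m + 1)) K}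
    (hX : X ∈ cyclicAlgebra m τ t) (hX0 : X ≠ 0) : X.det ≠ 0 := by
  classical
  let deg : K → ℤ := fun x => WithZero.log (v x)
  have hv0 : ∀ {x : K}, x ≠ 0 → v x ≠ 0 := fun hx => (v.ne_zero_iff).2 hx
  have hdeg : ∀ {x y : K}, x ≠ 0 → y ≠ 0 → deg (x * y) = deg x + deg y := fun hx hy => by
    simp only [deg, map_mul, WithZero.log_mul (hv0 hx) (hv0 hy)]
  have ht0 : t ≠ 0 := by
    rintro rfl
    exact WithZero.exp_ne_zero ((map_zero v).symm.trans hvt).symm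
  let u : Fin (m + 1) → K := fun i => if i = Fin.last m then t else 1
  have hu0 : ∀ i, u i ≠ 0 := fun i => by simp only [u]; split_ifs <;> simp [ht0]
  have hval : ∀ i : Fin (m + 1), (((i + 1 : Fin (m + 1)) : ℕ) : ℤ) =
      i + 1 - (m + 1) * deg (u i) := fun i => by
    rw [Fin.val_add_one]
    simp only [u, deg]
    split_ifs with h
    · simp [hvt, h]
    · simp
  let w : Fin (m + 1) → Fin (m + 1) → ℤ := fun i j => (m + 1) * deg (X i j) + (j - i)
  have hstep : ∀ i j, X i j ≠ 0 → X (i + 1) (j + 1) ≠ 0 ∧ w (i + 1) (j + 1) = w i j := by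
    intro i j hij
    have hrel : u i * X (i + 1) (j + 1) = τ (X i j) * u j := cyclicAlgebra_apply_add_one hX i j
    have hτ : τ (X i j) ≠ 0 := by simpa using hij
    have hne : X (i + 1) (j + 1) ≠ 0 := by
      intro h
      rw [h, mul_zero] at hrel
      exact mul_ne_zero hτ (hu0 j) hrel.symm
    refine ⟨hne, ?_⟩
    have h2 := congrArg deg hrel
    rw [hdeg (hu0 i) hne, hdeg hτ (hu0 j)] at h2
    have h3 : deg (τ (X i j)) = deg (X i j) := by simp only [deg, hvτ]
    simp only [w]
    rw [hval, hval]
    linear_combination (m + 1 : ℤ) * h2 + (m + 1 : ℤ) * h3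
  have hsteps : ∀ (i j : Fin (m + 1)), X i j ≠ 0 → ∀ a : Fin (m + 1),
      X (i + a) (j + a) ≠ 0 ∧ w (i + a) (j + a) = w i j := by
    intro i j hij a
    induction a using Fin.induction with
    | zero => simpa using hij
    | succ a ih =>
      rw [← Fin.coeSucc_eq_succ, ← add_assoc, ← add_assoc]
      obtain ⟨h1, h2⟩ := hstep _ _ ih.1
      exact ⟨h1, h2.trans ih.2⟩
  obtain ⟨p₀, hp₀⟩ : ∃ p : Fin (m + 1) × Fin (m + 1), X p.1 p.2 ≠ 0 := by
    by_contra! h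
    exact hX0 (Matrix.ext fun i j => h (i, j))
  obtain ⟨⟨i₀, j₀⟩, hmem, hmax⟩ := Finset.exists_max_image
    (Finset.univ.filter fun p : Fin (m + 1) × Fin (m + 1) => X p.1 p.2 ≠ 0)
    (fun p => w p.1 p.2) ⟨p₀, by simpa using hp₀⟩
  have hne₀ : X i₀ j₀ ≠ 0 := by simpa using hmem
  have hmax' : ∀ i j, X i j ≠ 0 → w i j ≤ w i₀ j₀ := fun i j h => hmax (i, j) (by simpa using h)
  -- the permutation along whose graph `w` is maximal
  let σ₀ : Equiv.Perm (Fin (m + 1)) := Equiv.addRight (i₀ - j₀)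
  have hσ₀ : ∀ j, X (σ₀ j) j ≠ 0 ∧ w (σ₀ j) j = w i₀ j₀ := fun j => by
    have := hsteps i₀ j₀ hne₀ (j - j₀)
    have e1 : i₀ + (j - j₀) = σ₀ j := by simp only [σ₀, Equiv.coe_addRight]; abel
    have e2 : j₀ + (j - j₀) = j := by abel
    rwa [e1, e2] at this
  have hlt : ∀ i j, X i j ≠ 0 → i ≠ σ₀ j → w i j < w i₀ j₀ := by
    intro i j hij hne
    refine lt_of_le_of_ne (hmax' i j hij) fun heq => hne ?_
    have h1 := heq.trans (hσ₀ j).2.symm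
    simp only [w] at h1
    have h2 : ((i : ℕ) : ℤ) ≡ (σ₀ j : ℕ) [ZMOD ((m + 1 : ℕ) : ℤ)] := by
      refine Int.modEq_iff_dvd.2 ⟨deg (X (σ₀ j) j) - deg (X i j), ?_⟩
      push_cast
      linear_combination h1
    have h3 := Nat.ModEq.eq_of_lt_of_lt (Int.natCast_modEq_iff.1 h2) i.2 (σ₀ j).2
    exact Fin.ext h3
  have hdegprod : ∀ σ : Equiv.Perm (Fin (m + 1)), (∀ j, X (σ j) j ≠ 0) →
      (m + 1) * deg (∏ j, X (σ j) j) = ∑ j, w (σ j) j := by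
    intro σ hσ
    have h1 : ∀ s : Finset (Fin (m + 1)),
        deg (∏ j ∈ s, X (σ j) j) = ∑ j ∈ s, deg (X (σ j) j) := by
      intro s
      induction s using Finset.induction_on with
      | empty => simp [deg]
      | insert a s ha ih =>
        rw [Finset.prod_insert ha, Finset.sum_insert ha,
          hdeg (hσ a) (Finset.prod_ne_zero_iff.2 fun j _ => hσ j), ih]
    simp only [w]
    rw [h1, Finset.sum_add_distrib, Finset.sum_sub_distrib,
      Equiv.sum_comp σ (fun j : Fin (m + 1) => ((j : ℕ) : ℤ)), sub_self, add_zero,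
      Finset.mul_sum]
  have hsign : ∀ σ : Equiv.Perm (Fin (m + 1)), v ((Equiv.Perm.sign σ : ℤ) : K) = 1 := by
    intro σ
    rcases Int.units_eq_one_or (Equiv.Perm.sign σ) with h | h <;> simp [h]
  have hprod₀ : ∏ j, X (σ₀ j) j ≠ 0 := Finset.prod_ne_zero_iff.2 fun j _ => (hσ₀ j).1
  have hterm : ∀ σ ∈ Finset.univ.erase σ₀,
      v (((Equiv.Perm.sign σ : ℤ) : K) * ∏ j, X (σ j) j) <
        v (((Equiv.Perm.sign σ₀ : ℤ) : K) * ∏ j, X (σ₀ j) j) := by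
    intro σ hσ
    rw [map_mul, map_mul, hsign, hsign, one_mul, one_mul]
    by_cases hz : ∃ j, X (σ j) j = 0
    · obtain ⟨j, hj⟩ := hz
      have hprod : ∏ j, X (σ j) j = 0 := Finset.prod_eq_zero (Finset.mem_univ j) hj
      rw [hprod, map_zero]
      exact zero_lt_iff.2 (hv0 hprod₀)
    · push Not at hz
      have hprod : ∏ j, X (σ j) j ≠ 0 := Finset.prod_ne_zero_iff.2 fun j _ => hz j
      rw [← WithZero.log_lt_log (hv0 hprod) (hv0 hprod₀)]
      have h1 := hdegprod σ hz
      have h2 := hdegprod σ₀ fun j => (hσ₀ j).1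
      obtain ⟨j, hj⟩ : ∃ j, σ j ≠ σ₀ j := by
        by_contra! h
        exact (Finset.mem_erase.1 hσ).1 (Equiv.ext h)
      have h3 : ∑ j, w (σ j) j < ∑ j, w (σ₀ j) j :=
        Finset.sum_lt_sum (fun j _ => (hmax' _ _ (hz j)).trans (hσ₀ j).2.ge)
          ⟨j, Finset.mem_univ j, (hlt _ _ (hz j) hj).trans_le (hσ₀ j).2.ge⟩
      rw [← h1, ← h2] at h3
      exact lt_of_mul_lt_mul_left h3 (by positivity)
  rw [Matrix.det_apply', ← Finset.add_sum_erase _ _ (Finset.mem_univ σ₀), ← v.ne_zero_iff]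
  have hne : v (((Equiv.Perm.sign σ₀ : ℤ) : K) * ∏ j, X (σ₀ j) j) ≠ 0 := by
    rw [map_mul, hsign, one_mul]
    exact hv0 hprod₀
  rw [Valuation.map_add_eq_of_lt_left v (v.map_sum_lt hne hterm)]
  exact hne

theorem cyclicShift_mem_cyclicAlgebra {τ : K ≃ₐ[F] K} {t : K} (ht : τ t = t) :
    cyclicShift m t ∈ cyclicAlgebra m τ t := by
  have h : (cyclicShift m t).map τ = cyclicShift m t := by
    ext i j
    simp only [cyclicShift, Matrix.map_apply, Matrix.of_apply]
    split_ifs <;> simp [ht]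
  rw [mem_cyclicAlgebra, h]

theorem diagonal_mem_cyclicAlgebra {τ : K ≃ₐ[F] K} {t : K} {x : Fin (m + 1) → K}
    (hx : ∀ i, τ (x i) = x (i + 1)) : Matrix.diagonal x ∈ cyclicAlgebra m τ t := by
  rw [mem_cyclicAlgebra]
  ext i j
  rw [Matrix.diagonal_map (map_zero τ), Matrix.diagonal_mul, Matrix.mul_diagonal]
  simp only [cyclicShift, Matrix.of_apply]
  by_cases h : j = i + 1
  · simp [h, hx, mul_comm]
  · simp [h]

theorem span_cyclicAlgebra_eq_top {τ : K ≃ₐ[F] K} {t : K} (ht0 : t ≠ 0) (ht : τ t = t)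
    {x : Fin (m + 1) → K} (hx : ∀ i, τ (x i) = x (i + 1)) (hinj : Function.Injective x) :
    Submodule.span K (cyclicAlgebra m τ t : Set (Matrix (Fin (m + 1)) (Fin (m + 1)) K)) = ⊤ := by
  set D := cyclicAlgebra m τ t
  let S : Subalgebra K (Matrix (Fin (m + 1)) (Fin (m + 1)) K) := Algebra.adjoin K D
  have hS : Subalgebra.toSubmodule S = Submodule.span K (D : Set _) := by
    rw [Algebra.adjoin_eq_span]
    congr 1
    exact congrArg SetLike.coe (Submonoid.closure_eq D.toSubsemiring.toSubmonoid)
  rw [← hS, eq_top_iff]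
  have hsub : ∀ {X}, X ∈ D → X ∈ S := fun h => Algebra.subset_adjoin h
  have hdiag : ∀ i, Matrix.single i i (1 : K) ∈ S := by
    intro i
    let S' : Subalgebra K (Fin (m + 1) → K) := S.comap (Matrix.diagonalAlgHom K)
    have hxS : x ∈ S' := hsub (diagonal_mem_cyclicAlgebra hx)
    have hprod : (∏ j ∈ Finset.univ.erase i,
        (x i - x j)⁻¹ • (x - algebraMap K (Fin (m + 1) → K) (x j))) ∈ S' :=
      Subalgebra.prod_mem _ fun j _ =>
        S'.smul_mem (S'.sub_mem hxS (S'.algebraMap_mem _)) _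
    have heq : (∏ j ∈ Finset.univ.erase i,
        (x i - x j)⁻¹ • (x - algebraMap K (Fin (m + 1) → K) (x j))) = Pi.single i 1 := by
      ext l
      rw [Finset.prod_apply]
      by_cases hl : l = i
      · subst hl
        rw [Pi.single_eq_same]
        refine Finset.prod_eq_one fun j hj => ?_
        have : x l - x j ≠ 0 := sub_ne_zero.2 fun h => (Finset.mem_erase.1 hj).1 (hinj h).symm
        simp [this]
      · rw [Pi.single_eq_of_ne hl]
        exact Finset.prod_eq_zero (Finset.mem_erase.2 ⟨hl, Finset.mem_univ l⟩) (by simp)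
    rw [heq] at hprod
    have : Matrix.diagonal (Pi.single i (1 : K)) ∈ S := hprod
    rwa [Matrix.diagonal_single] at this
  have hnext : ∀ i : Fin (m + 1), Matrix.single i (i + 1) (1 : K) ∈ S := by
    intro i
    have h := S.smul_mem (S.mul_mem (hdiag i) (hsub (cyclicShift_mem_cyclicAlgebra (m := m) ht)))
      (if i = Fin.last m then t else 1)⁻¹
    convert h using 1
    ext a b
    by_cases ha : a = i
    · subst ha
      simp only [Matrix.smul_apply, Matrix.single_mul_apply_same, cyclicShift, Matrix.of_apply,
        Matrix.single_apply]
      by_cases hb : b = a + 1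
      · subst hb
        split_ifs <;> simp_all
      · simp [hb, Ne.symm hb]
    · simp [ha, Ne.symm ha]
  have hall : ∀ i a : Fin (m + 1), Matrix.single i (i + a) (1 : K) ∈ S := by
    intro i a
    induction a using Fin.induction with
    | zero => simpa using hdiag i
    | succ a ih =>
      rw [← Fin.coeSucc_eq_succ, ← add_assoc]
      simpa using S.mul_mem ih (hnext (i + a.castSucc))
  intro X _
  rw [Matrix.matrix_eq_sum_single X]
  refine Submodule.sum_mem _ fun i _ => Submodule.sum_mem _ fun j _ => ?_
  have h := S.smul_mem (hall i (j - i)) (X i j)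
  rw [add_sub_cancel, Matrix.smul_single, smul_eq_mul, mul_one] at h
  exact h

end CyclicAlgebra

/-- Every field `F` has an extension `K` over whose matrix ring there is a division algebra of
degree `m + 1` that is finite-dimensional over an infinite field containing `F`. -/
theorem exists_division_subalgebra_matrix (F : Type) [Field F] (m : ℕ) :
    ∃ (K : Type) (_ : Field K) (_ : Algebra F K) (L : IntermediateField F K)
      (D : Subalgebra L (Matrix (Fin (m + 1)) (Fin (m + 1)) K)),
      Infinite L ∧ FiniteDimensional L K ∧ (∀ X ∈ D, X ≠ 0 → X.det ≠ 0) ∧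
        Submodule.span K (D : Set (Matrix (Fin (m + 1)) (Fin (m + 1)) K)) = ⊤ := by
  classical
  let P := MvPolynomial (Fin (m + 1)) F
  let E := FractionRing P
  let K := RatFunc E
  let ρ : P ≃ₐ[F] P := MvPolynomial.renameEquiv F (Equiv.addRight (1 : Fin (m + 1)))
  have hρX : ∀ i, ρ (MvPolynomial.X i) = MvPolynomial.X (i + 1) := fun i => by
    simp only [ρ]
    exact MvPolynomial.rename_X _ _
  have hρ : ρ ^ (m + 1) = 1 := by
    have hpow : ∀ (a : ℕ) (i : Fin (m + 1)),
        (ρ ^ a) (MvPolynomial.X i) = MvPolynomial.X (i + (Fin.ofNat (m + 1) a)) := by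
      intro a
      induction a with
      | zero => intro i; simp
      | succ a ih =>
        intro i
        rw [pow_succ', AlgEquiv.mul_apply, ih, hρX]
        congr 1
        ext
        simp [Fin.val_add, add_assoc]
    refine AlgEquiv.coe_toAlgHom_injective (MvPolynomial.algHom_ext fun i => ?_)
    simpa using hpow (m + 1) i
  let σ : E ≃ₐ[F] E := IsFractionRing.fieldEquivOfAlgEquivHom F E ρ
  have hσ : σ ^ (m + 1) = 1 := by rw [← map_pow, hρ, map_one]
  let θ : Polynomial E ≃ₐ[F] Polynomial E := Polynomial.mapAlgEquiv σ
  have hθ : θ ^ (m + 1) = 1 := by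
    have hpow : ∀ a : ℕ, θ ^ a = Polynomial.mapAlgEquiv (σ ^ a) := by
      intro a
      induction a with
      | zero => ext p; simp
      | succ a ih =>
        ext p
        simp [pow_succ', ih, θ]
    rw [hpow, hσ]
    ext p
    simp
  let τ : K ≃ₐ[F] K := IsFractionRing.fieldEquivOfAlgEquivHom F K θ
  have hτ : τ ^ (m + 1) = 1 := by rw [← map_pow, hθ, map_one]
  have hτθ : ∀ p : Polynomial E, τ (algebraMap _ K p) = algebraMap _ K (θ p) := fun p =>
    IsFractionRing.fieldEquivOfAlgEquiv_algebraMap F K K θ p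
  let t : K := RatFunc.X
  have ht : τ t = t := by
    have h := hτθ Polynomial.X
    have hX : θ Polynomial.X = Polynomial.X := by simp [θ]
    rwa [hX, RatFunc.algebraMap_X] at h
  let x : Fin (m + 1) → K := fun i =>
    algebraMap (Polynomial E) K (Polynomial.C (algebraMap P E (MvPolynomial.X i)))
  have hx : ∀ i, τ (x i) = x (i + 1) := by
    intro i
    have h : σ (algebraMap P E (MvPolynomial.X i)) = algebraMap P E (MvPolynomial.X (i + 1)) := by
      rw [← hρX]
      exact IsFractionRing.fieldEquivOfAlgEquiv_algebraMap F E E ρ _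
    simp only [x]
    rw [hτθ, ← h]
    simp [θ]
  have hinj : Function.Injective x :=
    (IsFractionRing.injective (Polynomial E) K).comp <| Polynomial.C_injective.comp <|
      (IsFractionRing.injective P E).comp MvPolynomial.X_injective
  let v : Valuation K (WithZero (Multiplicative ℤ)) := RatFunc.inftyValuation E
  have hvt : v t = WithZero.exp 1 := RatFunc.inftyValuation.X E
  have hvp : ∀ p : Polynomial E, v (algebraMap _ K (θ p)) = v (algebraMap _ K p) := by
    intro p
    by_cases hp : p = 0
    · simp [hp]
    · have hp' : θ p ≠ 0 := by simpa using hp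
      change RatFunc.inftyValuationDef E _ = RatFunc.inftyValuationDef E _
      rw [RatFunc.inftyValuation.polynomial _ hp, RatFunc.inftyValuation.polynomial _ hp']
      simp [θ]
  have hvτ : ∀ y, v (τ y) = v y := by
    intro y
    obtain ⟨p, q, -, rfl⟩ := IsFractionRing.div_surjective (A := Polynomial E) y
    rw [map_div₀, map_div₀, map_div₀, hτθ, hτθ, hvp, hvp]
  have hfin : Finite (Subgroup.zpowers τ) := by
    refine Set.finite_coe_iff.2 (finite_zpowers.2 ?_)
    exact isOfFinOrder_iff_pow_eq_one.2 ⟨m + 1, Nat.succ_pos m, hτ⟩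
  refine ⟨K, inferInstance, inferInstance, IntermediateField.fixedField (Subgroup.zpowers τ),
    cyclicAlgebra m τ t, ?_, ?_, fun X => det_ne_zero_of_mem_cyclicAlgebra v hvt hvτ,
    span_cyclicAlgebra_eq_top RatFunc.X_ne_zero ht hx hinj⟩
  · have htL : t ∈ IntermediateField.fixedField (Subgroup.zpowers τ) := by
      rw [IntermediateField.mem_fixedField_iff]
      intro f hf
      have hle : Subgroup.zpowers τ ≤ MulAction.stabilizer (K ≃ₐ[F] K) t := by
        rw [Subgroup.zpowers_le]
        exact ht
      exact hle hf
    refine Infinite.of_injective (fun a : ℕ =>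
      (⟨t, htL⟩ : IntermediateField.fixedField (Subgroup.zpowers τ)) ^ a) fun a b hab => ?_
    have h : t ^ a = t ^ b := congrArg Subtype.val hab
    have h2 := congrArg (fun y => WithZero.log (v y)) h
    simpa [hvt, WithZero.log_pow] using h2
  · exact inferInstanceAs (FiniteDimensional (FixedPoints.subfield (Subgroup.zpowers τ) K) K)

/-! ### Blow-ups -/

section BlowUp

variable {F : Type} [Field F] {n : ℕ} {B : Submodule F (Matrix (Fin n) (Fin n) F)}

theorem kronecker_mem_blowUp {k ℓ : ℕ} {A : Matrix (Fin n) (Fin n) F} (hA : A ∈ B)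
    (T : Matrix (Fin k) (Fin ℓ) F) : A ⊗ₖ T ∈ blowUp B k ℓ :=
  Submodule.subset_span ⟨A, hA, T, rfl⟩

theorem submatrix_mem_blowUp {k ℓ k' ℓ' : ℕ} {A : Matrix (Fin n × Fin k) (Fin n × Fin ℓ) F}
    (hA : A ∈ blowUp B k ℓ) (r : Fin k' → Fin k) (c : Fin ℓ' → Fin ℓ) :
    A.submatrix (Prod.map id r) (Prod.map id c) ∈ blowUp B k' ℓ' := by
  induction hA using Submodule.span_induction with
  | mem M hM =>
    obtain ⟨A, hA, T, rfl⟩ := hM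
    exact kronecker_mem_blowUp hA (T.submatrix r c)
  | zero => exact Submodule.zero_mem _
  | add M N _ _ hM hN => exact Submodule.add_mem _ hM hN
  | smul a M _ hM => exact Submodule.smul_mem _ a hM

/-- Deleting the last row and column of every block of a nonsingular matrix leaves a matrix of
corank at most the number of blocks per row. -/
theorem Matrix.card_le_rank_submatrix_castSucc_add {k : ℕ}
    {A : Matrix (Fin n × Fin (k + 1)) (Fin n × Fin (k + 1)) F} (hA : IsUnit A) :
    n * k ≤ (A.submatrix (Prod.map id Fin.castSucc) (Prod.map id Fin.castSucc)).rank + n := by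
  set A' := A.submatrix (Prod.map id (Fin.castSucc (n := k))) (Prod.map id (Fin.castSucc (n := k)))
  let R : Matrix (Fin n) (Fin n × Fin k) F :=
    A.submatrix (fun p => (p, Fin.last k)) (Prod.map id Fin.castSucc)
  let ext0 : (Fin n × Fin k → F) → (Fin n × Fin (k + 1) → F) := fun y q =>
    Fin.lastCases (motive := fun _ => F) 0 (fun b => y (q.1, b)) q.2
  have hext : ∀ y p, (A *ᵥ ext0 y) p =
      ∑ q : Fin n × Fin k, A p (q.1, q.2.castSucc) * y q := by
    intro y p
    simp [Matrix.mulVec, dotProduct, Fintype.sum_prod_type, Fin.sum_univ_castSucc, ext0]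
  have hinj : Function.Injective (R.mulVecLin.domRestrict A'.mulVecLin.ker) := by
    rw [injective_iff_map_eq_zero]
    rintro ⟨y, hy⟩ hRy
    have hy' : A' *ᵥ y = 0 := hy
    have hR' : R *ᵥ y = 0 := hRy
    have hzero : A *ᵥ ext0 y = 0 := by
      ext ⟨p, a⟩
      rw [hext]
      induction a using Fin.lastCases with
      | last => exact congrFun hR' p
      | cast a => exact congrFun hy' (p, a)
    have h0 : ext0 y = 0 := Matrix.mulVec_injective_of_isUnit hA (hzero.trans (A.mulVec_zero).symm)
    ext ⟨p, b⟩
    simpa [ext0] using congrFun h0 (p, b.castSucc)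
  have hker := LinearMap.finrank_le_finrank_of_injective hinj
  have hsum := A'.mulVecLin.finrank_range_add_finrank_ker
  rw [Module.finrank_fintype_fun_eq_card] at hker hsum
  simp only [Fintype.card_prod, Fintype.card_fin] at hker hsum
  have : A'.rank = Module.finrank F A'.mulVecLin.range := rfl
  omega

/-- A blow-up over a large enough field that contains a matrix of corank less than the size of a
block contains a nonsingular matrix. -/
theorem exists_det_ne_zero_of_lt_rank_add {m : ℕ} (s : Finset F) (hs : n * (m + 1) < s.card)
    {A : Matrix (Fin n × Fin (m + 1)) (Fin n × Fin (m + 1)) F} (hA : A ∈ blowUp B (m + 1) (m + 1))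
    (hrank : n * (m + 1) < A.rank + (m + 1)) :
    ∃ M ∈ blowUp B (m + 1) (m + 1), M.det ≠ 0 := by
  obtain ⟨K, _, _, L, D, _, _, hdet, hspan⟩ := exists_division_subalgebra_matrix F m
  let κ : Matrix (Fin n) (Fin n) K → Matrix (Fin (m + 1)) (Fin (m + 1)) K →ₗ[K]
      Matrix (Fin n × Fin (m + 1)) (Fin n × Fin (m + 1)) K := Matrix.kroneckerBilinear (R := K)
  let extend : Matrix (Fin n × Fin (m + 1)) (Fin n × Fin (m + 1)) F →ₗ[F]
      Matrix (Fin n × Fin (m + 1)) (Fin n × Fin (m + 1)) K := (Algebra.linearMap F K).mapMatrix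
  -- the `L`-space of matrices in the extended blow-up with blocks in `D`
  let W : Submodule L (Matrix (Fin n × Fin (m + 1)) (Fin n × Fin (m + 1)) K) :=
    Submodule.span L {M | ∃ b ∈ B, ∃ X ∈ D, M = κ (b.map (algebraMap F K)) X}
  have hAW : extend A ∈ Submodule.span K (W : Set (Matrix _ _ K)) := by
    clear hrank
    induction hA using Submodule.span_induction with
    | mem M hM =>
      obtain ⟨b, hb, T, rfl⟩ := hM
      have hT : T.map (algebraMap F K) ∈
          Submodule.span K (D : Set (Matrix (Fin (m + 1)) (Fin (m + 1)) K)) := by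
        rw [hspan]
        trivial
      have h := Submodule.mem_map_of_mem (f := κ (b.map (algebraMap F K))) hT
      rw [Submodule.map_span] at h
      have heq : extend (b ⊗ₖ T) = κ (b.map (algebraMap F K)) (T.map (algebraMap F K)) := by
        ext p q
        simp [extend, κ, Matrix.kroneckerBilinear]
      rw [heq]
      refine Submodule.span_mono ?_ h
      rintro _ ⟨X, hX, rfl⟩
      exact Submodule.subset_span ⟨b, hb, X, hX, rfl⟩
    | zero => rw [map_zero]; exact Submodule.zero_mem _
    | add M N _ _ hM hN => rw [map_add]; exact Submodule.add_mem _ hM hN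
    | smul a M _ hM =>
      rw [map_smul, ← algebraMap_smul K a]
      exact Submodule.smul_mem _ _ hM
  obtain ⟨M, hMW, hAM⟩ := W.exists_rank_le_of_mem_span hAW
  have hMdet : M.det ≠ 0 := by
    obtain ⟨N, rfl⟩ : ∃ N : Matrix (Fin n) (Fin n) D,
        Matrix.compRingEquiv (Fin n) (Fin (m + 1)) K (N.map D.val) = M := by
      clear hAM
      induction hMW using Submodule.span_induction with
      | mem M hM =>
        obtain ⟨b, -, X, hX, rfl⟩ := hM
        refine ⟨Matrix.of fun p q => algebraMap F L (b p q) • (⟨X, hX⟩ : D), ?_⟩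
        ext p q
        rfl
      | zero => exact ⟨0, by ext p q; rfl⟩
      | add M M' _ _ hM hM' =>
        obtain ⟨N, rfl⟩ := hM
        obtain ⟨N', rfl⟩ := hM'
        exact ⟨N + N', by ext p q; rfl⟩
      | smul c M _ hM =>
        obtain ⟨N, rfl⟩ := hM
        exact ⟨c • N, by ext p q; rfl⟩
    refine (Matrix.det_ne_zero_or_rank_add_card_le D hdet N).resolve_right fun hle => ?_
    have hrankA : A.rank ≤ (extend A).rank := Matrix.rank_le_rank_map (algebraMap F K) A
    simp only [Fintype.card_prod, Fintype.card_fin] at hle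
    omega
  have hMspan : M ∈ Submodule.span K
      ((blowUp B (m + 1) (m + 1)).map extend : Set (Matrix _ _ K)) := by
    clear hAM hMdet
    induction hMW using Submodule.span_induction with
    | mem M hM =>
      obtain ⟨b, hb, X, -, rfl⟩ := hM
      rw [Matrix.matrix_eq_sum_single X, map_sum]
      refine Submodule.sum_mem _ fun i _ => ?_
      rw [map_sum]
      refine Submodule.sum_mem _ fun j _ => ?_
      have heq : κ (b.map (algebraMap F K)) (Matrix.single i j (X i j)) =
          X i j • extend (b ⊗ₖ Matrix.single i j 1) := by
        ext p q
        simp [extend, κ, Matrix.kroneckerBilinear, Matrix.single_apply,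
          apply_ite (algebraMap F K), mul_comm]
      rw [heq]
      exact Submodule.smul_mem _ _ (Submodule.subset_span
        (Submodule.mem_map_of_mem (kronecker_mem_blowUp hb _)))
    | zero => exact Submodule.zero_mem _
    | add M N _ _ hM hN => exact Submodule.add_mem _ hM hN
    | smul c M _ hM =>
      rw [← algebraMap_smul K c]
      exact Submodule.smul_mem _ _ hM
  obtain ⟨_, ⟨M', hM', rfl⟩, hdetM'⟩ := Submodule.exists_det_ne_zero_of_mem_span
    LinearMap.id s (by simpa using hs) _ hMspan hMdet
  refine ⟨M', hM', fun h => hdetM' ?_⟩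
  have hmap : (extend M').det = algebraMap F K M'.det := (RingHom.map_det _ _).symm
  rw [LinearMap.id_apply, hmap, h, map_zero]

end BlowUp

/-- Blow-up size reduction: for all positive `n, d` there is `N` such that over any field
`F` with `|F| ≥ N`, if `d > n + 1` and the `(d,d)`-blow-up of `B ≤ M(n,F)` contains a
matrix of rank `d·n`, then the `(d−1,d−1)`-blow-up contains a matrix of rank `(d−1)·n`. -/
theorem stmt12 (n d : ℕ) (hn : 0 < n) (hd : 0 < d) :
    ∃ N : ℕ, ∀ (F : Type) (_ : Field F),
      (N : Cardinal) ≤ Cardinal.mk F →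
      ∀ (B : Submodule F (Matrix (Fin n) (Fin n) F)),
        n + 1 < d →
        (∃ A ∈ blowUp B d d, A.rank = d * n) →
        ∃ A' ∈ blowUp B (d - 1) (d - 1), A'.rank = (d - 1) * n := by
  refine ⟨n * (d - 1) + 1, ?_⟩
  rintro F _ hF B hnd ⟨A, hA, hrank⟩
  obtain ⟨m, rfl⟩ : ∃ m, d = m + 2 := ⟨d - 2, by omega⟩
  obtain ⟨s, hs⟩ := Cardinal.exists_finset_le_card F _ hF
  change ∃ A' ∈ blowUp B (m + 1) (m + 1), A'.rank = (m + 1) * n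
  have hunit : IsUnit A := by
    rw [← Matrix.mulVec_surjective_iff_isUnit]
    refine (LinearMap.range_eq_top (f := A.mulVecLin)).1 (Submodule.eq_top_of_finrank_eq ?_)
    rw [Module.finrank_fintype_fun_eq_card, Fintype.card_prod, Fintype.card_fin, Fintype.card_fin,
      mul_comm]
    exact hrank
  have hcorank := Matrix.card_le_rank_submatrix_castSucc_add hunit
  obtain ⟨M, hM, hdet⟩ := exists_det_ne_zero_of_lt_rank_add s hs
    (submatrix_mem_blowUp hA Fin.castSucc Fin.castSucc) (by nlinarith)
  refine ⟨M, hM, ?_⟩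
  rw [Matrix.rank_of_det_ne_zero hdet]
  simp [mul_comm]
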